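/- For any universe U with |U| ≥ 3 and any Condorcet extension f (an SCF that uniquely selects the Condorcet winner whenever one exists), f is P̂-manipulable: there exist a feasible set A, a voter i, and preference profiles R, R' differing only in voter i's preferences such that f(R',A) P̂_i f(R,A), where P̂_i is the strict part of Kelly's extension. -/

import Mathlib

open scoped Classical

variable {U : Type*}

/-- A relation is complete (total). -/
def Complete (R : U → U → Prop) : Prop := ∀ a b : U, R a b ∨ R b a

/-- Strict part of a preference relation. -/
def StrictPref (R : U → U → Prop) (a b : U) : Prop := R a b ∧ ¬ R b a

/-- Indifference part of a preference relation. -/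
def Indiff (R : U → U → Prop) (a b : U) : Prop := R a b ∧ R b a

/-- Kelly's weak set extension: every element of `X` is weakly preferred to every element of `Y`. -/
def KellyR (R : U → U → Prop) (X Y : Finset U) : Prop := ∀ x ∈ X, ∀ y ∈ Y, R x y

/-- Kelly's strict set extension. -/
def KellyP (R : U → U → Prop) (X Y : Finset U) : Prop :=
  KellyR R X Y ∧ ∃ x ∈ X, ∃ y ∈ Y, StrictPref R x y

/-- A social choice function: for any number of voters, maps a preference profile and a
feasible set to a nonempty subset of it, depending only on preferences restricted to it. -/
structure SCF (U : Type*) where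
  choice : ∀ n : ℕ, (Fin n → U → U → Prop) → Finset U → Finset U
  choice_subset : ∀ n R A, choice n R A ⊆ A
  choice_nonempty : ∀ n (R : Fin n → U → U → Prop) (A : Finset U),
    A.Nonempty → (choice n R A).Nonempty
  iia : ∀ n (R R' : Fin n → U → U → Prop) (A : Finset U),
    (∀ i, ∀ a ∈ A, ∀ b ∈ A, R i a b ↔ R' i a b) → choice n R A = choice n R' A

/-- `R'` is obtained from `R` by weakly strengthening `a` against `b`:
either `R' = R`, or `R' = R ∪ {(a,b)}`, or `R' = (R \ {(b,a)}) ∪ {(a,b)}`. -/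
def weaklyStrengthens (R R' : U → U → Prop) (a b : U) : Prop :=
  (∀ x y, R' x y ↔ R x y) ∨
  (∀ x y, R' x y ↔ (R x y ∨ (x = a ∧ y = b))) ∨
  (∀ x y, R' x y ↔ ((R x y ∧ ¬(x = b ∧ y = a)) ∨ (x = a ∧ y = b)))

/-- Set-monotonicity: the choice set is invariant under weakening unchosen alternatives. -/
def SetMonotone (f : SCF U) : Prop :=
  ∀ (n : ℕ) (R R' : Fin n → U → U → Prop) (A : Finset U) (i : Fin n) (a b : U),
    (∀ j, Complete (R j)) → (∀ j, Complete (R' j)) → A.Nonempty →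
    a ∈ A → b ∈ A → b ∉ f.choice n R A →
    (∀ j, j ≠ i → R' j = R j) →
    weaklyStrengthens (R i) (R' i) a b →
    f.choice n R' A = f.choice n R A

/-- Strong monotonicity (Maskin-style). -/
def StrongMonotone (f : SCF U) : Prop :=
  ∀ (n : ℕ) (R R' : Fin n → U → U → Prop) (A : Finset U) (i : Fin n) (a b x : U),
    (∀ j, Complete (R j)) → (∀ j, Complete (R' j)) → A.Nonempty →
    a ∈ A → b ∈ A → b ≠ x → x ∈ f.choice n R A →
    (∀ j, j ≠ i → R' j = R j) →
    weaklyStrengthens (R i) (R' i) a b →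
    x ∈ f.choice n R' A

/-- Monotonicity: a chosen alternative stays chosen when it is weakly strengthened. -/
def MonotoneSCF (f : SCF U) : Prop :=
  ∀ (n : ℕ) (R R' : Fin n → U → U → Prop) (A : Finset U) (i : Fin n) (a b : U),
    (∀ j, Complete (R j)) → (∀ j, Complete (R' j)) → A.Nonempty →
    a ∈ A → b ∈ A → a ∈ f.choice n R A →
    (∀ j, j ≠ i → R' j = R j) →
    weaklyStrengthens (R i) (R' i) a b →
    a ∈ f.choice n R' A

/-- Independence of unchosen alternatives. -/
def IUA (f : SCF U) : Prop :=
  ∀ (n : ℕ) (R R' : Fin n → U → U → Prop) (A : Finset U),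
    (∀ j, Complete (R j)) → (∀ j, Complete (R' j)) → A.Nonempty →
    (∀ i : Fin n, ∀ a ∈ f.choice n R A, ∀ b ∈ A,
      (R i a b ↔ R' i a b) ∧ (R i b a ↔ R' i b a)) →
    f.choice n R' A = f.choice n R A

/-- Strong superset property: choice sets are invariant under removal of unchosen alternatives. -/
def SSP (f : SCF U) : Prop :=
  ∀ (n : ℕ) (R : Fin n → U → U → Prop) (A B : Finset U),
    (∀ j, Complete (R j)) → A.Nonempty →
    f.choice n R A ⊆ B → B ⊆ A →
    f.choice n R B = f.choice n R A

/-- Weak R̂-group-strategyproofness: no group can obtain a Kelly-weakly-preferred different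
choice set by misreporting only their strict preferences. -/
def WeakKellyGroupSP (f : SCF U) : Prop :=
  ¬ ∃ (n : ℕ) (R R' : Fin n → U → U → Prop) (A : Finset U) (G : Finset (Fin n)),
    (∀ j, Complete (R j)) ∧ (∀ j, Complete (R' j)) ∧ A.Nonempty ∧
    (∀ i, i ∉ G → R' i = R i) ∧
    (∀ i ∈ G, ∀ a b : U, Indiff (R i) a b → Indiff (R' i) a b) ∧
    f.choice n R' A ≠ f.choice n R A ∧
    (∀ i ∈ G, KellyR (R i) (f.choice n R' A) (f.choice n R A))

/-- Weak R̂-strategyproofness (single manipulator misreporting only strict preferences). -/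
def WeakKellySP (f : SCF U) : Prop :=
  ¬ ∃ (n : ℕ) (R R' : Fin n → U → U → Prop) (A : Finset U) (i : Fin n),
    (∀ j, Complete (R j)) ∧ (∀ j, Complete (R' j)) ∧ A.Nonempty ∧
    (∀ j, j ≠ i → R' j = R j) ∧
    (∀ a b : U, Indiff (R i) a b → Indiff (R' i) a b) ∧
    f.choice n R' A ≠ f.choice n R A ∧
    KellyR (R i) (f.choice n R' A) (f.choice n R A)

/-- Weak P̂-strategyproofness (single manipulator misreporting only strict preferences). -/
def WeakKellyPSP (f : SCF U) : Prop :=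
  ¬ ∃ (n : ℕ) (R R' : Fin n → U → U → Prop) (A : Finset U) (i : Fin n),
    (∀ j, Complete (R j)) ∧ (∀ j, Complete (R' j)) ∧ A.Nonempty ∧
    (∀ j, j ≠ i → R' j = R j) ∧
    (∀ a b : U, Indiff (R i) a b → Indiff (R' i) a b) ∧
    f.choice n R' A ≠ f.choice n R A ∧
    KellyP (R i) (f.choice n R' A) (f.choice n R A)

/-- Net majority margin of `a` against `b`. -/
noncomputable def margin {n : ℕ} (R : Fin n → U → U → Prop) (a b : U) : ℤ :=
  ((Finset.univ.filter fun i => StrictPref (R i) a b).card : ℤ) -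
  ((Finset.univ.filter fun i => StrictPref (R i) b a).card : ℤ)

/-- A pairwise SCF: the outcome depends only on the net pairwise majority margins. -/
def PairwiseSCF (f : SCF U) : Prop :=
  ∀ (n m : ℕ) (R : Fin n → U → U → Prop) (R' : Fin m → U → U → Prop) (A : Finset U),
    (∀ j, Complete (R j)) → (∀ j, Complete (R' j)) →
    (∀ a ∈ A, ∀ b ∈ A, margin R a b = margin R' a b) →
    f.choice n R A = f.choice m R' A

/-- Condorcet winner: beats every other feasible alternative in pairwise majority comparisons. -/
def CondorcetWinner {V : Type*} [Fintype V] (R : V → U → U → Prop) (A : Finset U)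
    (c : U) : Prop :=
  c ∈ A ∧ ∀ b ∈ A, b ≠ c →
    (Finset.univ.filter fun i => R i c b).card > (Finset.univ.filter fun i => R i b c).card

/-- A Condorcet extension uniquely selects the Condorcet winner whenever one exists. -/
def CondorcetExtension (f : SCF U) : Prop :=
  ∀ (n : ℕ) (R : Fin n → U → U → Prop) (A : Finset U) (c : U),
    (∀ j, Complete (R j)) → CondorcetWinner R A c → f.choice n R A = {c}

/-- A resolute SCF always chooses a single alternative. -/
def Resolute (f : SCF U) : Prop :=
  ∀ (n : ℕ) (R : Fin n → U → U → Prop) (A : Finset U),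
    (∀ j, Complete (R j)) → A.Nonempty → (f.choice n R A).card = 1

/-- `x` is strictly worst, everything else is tied. -/
def botRel (x : U) (u v : U) : Prop := u = x → v = x

/-- `y` is strictly best, `x` is strictly worst, everything else is tied. -/
def topBotRel (y x : U) (u v : U) : Prop := ¬ ((v = y ∧ u ≠ y) ∨ (u = x ∧ v ≠ x))

/-- The cyclic relation `b > a > c > b`, everything else tied. -/
def cycRel (a b c : U) (u v : U) : Prop :=
  ¬ ((v = b ∧ u = a) ∨ (v = a ∧ u = c) ∨ (v = c ∧ u = b))

lemma botRel_complete (x : U) : Complete (botRel x) := by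
  intro u v; unfold botRel; tauto

lemma topBotRel_complete {y x : U} (h : y ≠ x) : Complete (topBotRel y x) := by
  intro u v; unfold topBotRel; grind

lemma cycRel_complete {a b c : U} (hab : a ≠ b) (hbc : b ≠ c) (hac : a ≠ c) :
    Complete (cycRel a b c) := by
  intro u v; unfold cycRel; grind

/-- One step: a voter ranking `x` strictly last cannot get rid of `x` by misreporting. -/
lemma stay_chosen (f : SCF U) (n : ℕ) (P : Fin n → U → U → Prop) (A : Finset U) (i : Fin n)
    (x : U) (Q : U → U → Prop) (hA : A.Nonempty)
    (hno : ¬ ∃ (n : ℕ) (R R' : Fin n → U → U → Prop) (A : Finset U) (i : Fin n),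
      (∀ j, Complete (R j)) ∧ (∀ j, Complete (R' j)) ∧ A.Nonempty ∧
      (∀ j, j ≠ i → R' j = R j) ∧
      KellyP (R i) (f.choice n R' A) (f.choice n R A))
    (hP : ∀ j, Complete (P j)) (hQ : Complete Q) (hi : P i = botRel x)
    (hx : x ∈ f.choice n P A) : x ∈ f.choice n (Function.update P i Q) A := by
  by_contra hx'
  refine hno ⟨n, P, Function.update P i Q, A, i, hP, ?_, hA, ?_, ?_, ?_⟩
  · intro j
    by_cases h : j = i
    · subst h; simpa using hQ
    · simpa [h] using hP j
  · intro j h; simp [h]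
  · intro u hu v _
    rw [hi]
    intro h
    exact absurd (h ▸ hu) hx'
  · obtain ⟨w, hw⟩ := f.choice_nonempty n (Function.update P i Q) A hA
    refine ⟨w, hw, x, hx, ?_⟩
    have : w ≠ x := fun h => hx' (h ▸ hw)
    rw [hi]
    simp [StrictPref, botRel, this]

/-- Two voters ranking `x` strictly last: `x` stays chosen after both misreport. -/
lemma two_steps (f : SCF U) (hf : CondorcetExtension f) (n : ℕ) (P : Fin n → U → U → Prop)
    (A : Finset U) (i k : Fin n) (hik : k ≠ i) (x y : U) (hyx : y ≠ x) (hA : A.Nonempty)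
    (hno : ¬ ∃ (n : ℕ) (R R' : Fin n → U → U → Prop) (A : Finset U) (i : Fin n),
      (∀ j, Complete (R j)) ∧ (∀ j, Complete (R' j)) ∧ A.Nonempty ∧
      (∀ j, j ≠ i → R' j = R j) ∧
      KellyP (R i) (f.choice n R' A) (f.choice n R A))
    (hP : ∀ j, Complete (P j)) (hi : P i = botRel x) (hk : P k = botRel x)
    (hw : CondorcetWinner (Function.update (Function.update P i (topBotRel y x)) k
      (topBotRel y x)) A y) : x ∉ f.choice n P A := by
  intro hx
  have hQ := topBotRel_complete hyx
  have hP1 : ∀ j, Complete (Function.update P i (topBotRel y x) j) := by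
    intro j
    by_cases h : j = i
    · subst h; simpa using hQ
    · simpa [h] using hP j
  have hP2 : ∀ j, Complete (Function.update (Function.update P i (topBotRel y x)) k
      (topBotRel y x) j) := by
    intro j
    by_cases h : j = k
    · subst h; simpa using hQ
    · simpa [h] using hP1 j
  have h1 := stay_chosen f n P A i x _ hA hno hP hQ hi hx
  have h2 := stay_chosen f n _ A k x _ hA hno hP1 hQ (by simp [hik, hk]) h1
  rw [hf n _ A y hP2 hw] at h2
  exact hyx (Finset.mem_singleton.1 h2).symm

/-- Every Condorcet extension is P̂-manipulable when there are at least three alternatives. -/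
theorem condorcet_extension_manipulable (f : SCF U)
    (hU : ∃ a b c : U, a ≠ b ∧ b ≠ c ∧ a ≠ c)
    (hf : CondorcetExtension f) :
    ∃ (n : ℕ) (R R' : Fin n → U → U → Prop) (A : Finset U) (i : Fin n),
      (∀ j, Complete (R j)) ∧ (∀ j, Complete (R' j)) ∧ A.Nonempty ∧
      (∀ j, j ≠ i → R' j = R j) ∧
      KellyP (R i) (f.choice n R' A) (f.choice n R A) := by
  by_contra hno
  obtain ⟨a, b, c, hab, hbc, hac⟩ := hU
  have hP : ∀ j, Complete ((![cycRel a b c, botRel a, botRel a, botRel b, botRel b,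
      botRel c, botRel c] : Fin 7 → U → U → Prop) j) := by
    intro j
    fin_cases j
    · exact cycRel_complete hab hbc hac
    all_goals exact botRel_complete _
  have hA : ({a, b, c} : Finset U).Nonempty := ⟨a, by simp⟩
  have ha := two_steps f hf 7 _ {a, b, c} 1 2 (by decide) a b hab.symm hA hno hP rfl rfl (by
    refine ⟨by simp, ?_⟩
    intro u hu hne
    simp only [Finset.mem_insert, Finset.mem_singleton] at hu
    rcases hu with rfl | rfl | rfl
    all_goals first
      | exact absurd rfl hne
      | simp only [Finset.card_filter, Fin.sum_univ_seven]
        simp [-Finset.sum_boole, Function.update, botRel, topBotRel,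
          cycRel, hab, hbc, hac, hab.symm, hbc.symm, hac.symm, Fin.ext_iff])
  have hb := two_steps f hf 7 _ {a, b, c} 3 4 (by decide) b c hbc.symm hA hno hP rfl rfl (by
    refine ⟨by simp, ?_⟩
    intro u hu hne
    simp only [Finset.mem_insert, Finset.mem_singleton] at hu
    rcases hu with rfl | rfl | rfl
    all_goals first
      | exact absurd rfl hne
      | simp only [Finset.card_filter, Fin.sum_univ_seven]
        simp [-Finset.sum_boole, Function.update, botRel, topBotRel,
          cycRel, hab, hbc, hac, hab.symm, hbc.symm, hac.symm, Fin.ext_iff])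
  have hc := two_steps f hf 7 _ {a, b, c} 5 6 (by decide) c a hac hA hno hP rfl rfl (by
    refine ⟨by simp, ?_⟩
    intro u hu hne
    simp only [Finset.mem_insert, Finset.mem_singleton] at hu
    rcases hu with rfl | rfl | rfl
    all_goals first
      | exact absurd rfl hne
      | simp only [Finset.card_filter, Fin.sum_univ_seven]
        simp [-Finset.sum_boole, Function.update, botRel, topBotRel,
          cycRel, hab, hbc, hac, hab.symm, hbc.symm, hac.symm, Fin.ext_iff])
  obtain ⟨w, hw⟩ := f.choice_nonempty 7 _ {a, b, c} hA
  have hwA := f.choice_subset 7 _ _ hw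
  simp only [Finset.mem_insert, Finset.mem_singleton] at hwA
  rcases hwA with rfl | rfl | rfl
  · exact ha hw
  · exact hb hw
  · exact hc hw
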